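/- Suppose the hard core of A is empty, H(A) = ∅ (weak learnability). Then Ker(Aᵀ) ∩ ℝ₊^m = {0}, so D¹_{ℝ₊^m ∩ Ker(Aᵀ)}(∇f(Aλ)) = ‖∇f(Aλ)‖₁ = f(Aλ) for every λ; and if moreover the ESO holds with constant β > 0 and γ̃(A, ℝ₊^m) > 0, then for every λ ∈ ℝ^n, taking δ_i = −(1/(β L_i))·∇_i F(λ), one has E[F(λ + δ_{[Ŝ]})] ≤ F(λ) − (τ/(2βn)) · γ̃(A, ℝ₊^m)². -/

import Mathlib

open Finset
open scoped BigOperators Classical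

noncomputable section

/-- Exponential loss `f(x) = (1/m) Σ_j exp(x_j)` (the normaliser `m` is fixed,
the index type may vary). -/
def fExp (m : ℕ) {ι : Type} [Fintype ι] (x : ι → ℝ) : ℝ :=
  (1 / (m : ℝ)) * ∑ j, Real.exp (x j)

/-- Gradient of the exponential loss. -/
def gradf (m : ℕ) {ι : Type} [Fintype ι] (x : ι → ℝ) : ι → ℝ :=
  fun j => fderiv ℝ (fExp m (ι := ι)) x (Pi.single j 1)

/-- `F(λ) = log f(Aλ)`. -/
def FObj {mr : Type} [Fintype mr] {n : ℕ} (m : ℕ) (A : Matrix mr (Fin n) ℝ)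
    (lam : Fin n → ℝ) : ℝ :=
  Real.log (fExp m (A.mulVec lam))

/-- Gradient of `F`: `(∇F(λ))_i` is the `i`-th partial derivative. -/
def gradF {mr : Type} [Fintype mr] {n : ℕ} (m : ℕ) (A : Matrix mr (Fin n) ℝ)
    (lam : Fin n → ℝ) : Fin n → ℝ :=
  fun i => fderiv ℝ (FObj m A) lam (Pi.single i 1)

/-- Coordinate-wise Lipschitz constants `L_i = max_j A_{j,i}²`. -/
def Lip {mr : Type} [Fintype mr] {n : ℕ} (A : Matrix mr (Fin n) ℝ) (i : Fin n) : ℝ :=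
  ⨆ j, (A j i) ^ 2

/-- `h_{[S]}`: keep the coordinates of `h` in `S`, zero the others. -/
def restr {n : ℕ} (h : Fin n → ℝ) (S : Finset (Fin n)) : Fin n → ℝ :=
  fun i => if i ∈ S then h i else 0

/-- Expectation over the `τ`-nice sampling (uniform over subsets of cardinality `τ`). -/
def niceExp (n τ : ℕ) (g : Finset (Fin n) → ℝ) : ℝ :=
  (∑ S ∈ Finset.powersetCard τ (Finset.univ : Finset (Fin n)), g S) /
    ((Finset.powersetCard τ (Finset.univ : Finset (Fin n))).card : ℝ)

/-- Expected Separable Overapproximation with constant `β` and weights `L`. -/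
def ESO {mr : Type} [Fintype mr] {n : ℕ} (m : ℕ) (A : Matrix mr (Fin n) ℝ)
    (τ : ℕ) (β : ℝ) : Prop :=
  ∀ x h : Fin n → ℝ,
    niceExp n τ (fun S => FObj m A (x + restr h S)) ≤
      FObj m A x + ((τ : ℝ) / (n : ℝ)) *
        ((∑ i, gradF m A x i * h i) + (β / 2) * ∑ i, Lip A i * h i ^ 2)

/-- ℓ¹ distance from `x` to a set `K`. -/
def D1 {ι : Type} [Fintype ι] (K : Set (ι → ℝ)) (x : ι → ℝ) : ℝ :=
  ⨅ z : K, ∑ j, |x j - (z : ι → ℝ) j|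

/-- Kernel of `Aᵀ`. -/
def kerAT {mr : Type} [Fintype mr] {n : ℕ} (A : Matrix mr (Fin n) ℝ) : Set (mr → ℝ) :=
  {φ | A.transpose.mulVec φ = 0}

/-- `‖g‖_{L⁻¹} = (Σ_i g_i²/L_i)^{1/2}`. -/
def normLinv {mr : Type} [Fintype mr] {n : ℕ} (A : Matrix mr (Fin n) ℝ)
    (g : Fin n → ℝ) : ℝ :=
  Real.sqrt (∑ i, g i ^ 2 / Lip A i)

/-- `γ̃(A,K)`. -/
def gammaT {mr : Type} [Fintype mr] {n : ℕ} (A : Matrix mr (Fin n) ℝ)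
    (K : Set (mr → ℝ)) : ℝ :=
  ⨅ φ : {φ : mr → ℝ // φ ∈ K ∧ φ ∉ kerAT A},
    normLinv A (A.transpose.mulVec (φ : mr → ℝ)) / D1 (K ∩ kerAT A) (φ : mr → ℝ)

/-- Hard core `H(A)`. -/
def hardCore {mr : Type} [Fintype mr] {n : ℕ} (A : Matrix mr (Fin n) ℝ) : Set mr :=
  {j | ∃ φ : mr → ℝ, φ ∈ kerAT A ∧ (∀ k, 0 ≤ φ k) ∧ 0 < φ j}

/-- Parallel Adaboost iterates, given the sequence of sampled coordinate sets. -/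
def iter {mr : Type} [Fintype mr] {n : ℕ} (m : ℕ) (A : Matrix mr (Fin n) ℝ) (β : ℝ)
    (lam0 : Fin n → ℝ) (s : ℕ → Finset (Fin n)) : ℕ → Fin n → ℝ
  | 0 => lam0
  | t + 1 =>
    let lt := iter m A β lam0 s t
    let lt' : Fin n → ℝ := fun i =>
      if i ∈ s t then lt i - (1 / (β * Lip A i)) * gradF m A lt i else lt i
    if FObj m A lt' ≤ FObj m A lt then lt' else lt

/-!
The chain rule gives `∇F(λ) = Aᵀ∇f(Aλ) / f(Aλ)`, so the definition of `γ̃(A, K)`, evaluated at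
`φ = ∇f(Aλ) ∈ K`, says `γ̃(A, K) · D¹(∇f(Aλ)) / f(Aλ) ≤ ‖∇F(λ)‖_{L⁻¹}`. The step `δ` minimises the
quadratic upper model of the ESO, whose minimum is `F(λ) - τ/(2βn) · ‖∇F(λ)‖²_{L⁻¹}`. When the hard
core is empty and `K = ℝ₊^m`, the distance `D¹` is taken to `{0}`, and `‖∇f(Aλ)‖₁ = f(Aλ)` makes
the ratio `D¹(∇f(Aλ)) / f(Aλ)` equal to `1`.
-/

section ExponentialLoss

variable {ι : Type} [Fintype ι]

theorem hasFDerivAt_fExp (m : ℕ) (x : ι → ℝ) :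
    HasFDerivAt (fExp m) ((1 / (m : ℝ)) •
      ∑ j, Real.exp (x j) • (ContinuousLinearMap.proj j : (ι → ℝ) →L[ℝ] ℝ)) x :=
  (HasFDerivAt.fun_sum fun j _ => (hasFDerivAt_apply j x).exp).const_mul _

theorem gradf_apply (m : ℕ) (x : ι → ℝ) (j : ι) :
    gradf m x j = 1 / (m : ℝ) * Real.exp (x j) := by
  simp [gradf, (hasFDerivAt_fExp m x).fderiv, Pi.single_apply]

theorem hasFDerivAt_fExp_gradf (m : ℕ) (x : ι → ℝ) :
    HasFDerivAt (fExp m)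
      (∑ j, gradf m x j • (ContinuousLinearMap.proj j : (ι → ℝ) →L[ℝ] ℝ)) x := by
  simpa only [gradf_apply, mul_smul, Finset.smul_sum] using hasFDerivAt_fExp m x

theorem gradf_nonneg (m : ℕ) (x : ι → ℝ) (j : ι) : 0 ≤ gradf m x j := by
  rw [gradf_apply]
  positivity

theorem sum_abs_gradf (m : ℕ) (x : ι → ℝ) : ∑ j, |gradf m x j| = fExp m x :=
  calc ∑ j, |gradf m x j| = ∑ j, gradf m x j :=
        Finset.sum_congr rfl fun j _ => abs_of_nonneg (gradf_nonneg m x j)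
    _ = fExp m x := by simp only [gradf_apply, fExp, Finset.mul_sum]

theorem fExp_pos [Nonempty ι] {m : ℕ} (hm : 0 < m) (x : ι → ℝ) : 0 < fExp m x := by
  unfold fExp
  positivity

end ExponentialLoss

section L1Distance

variable {ι : Type} [Fintype ι]

theorem D1_nonneg (K : Set (ι → ℝ)) (x : ι → ℝ) : 0 ≤ D1 K x :=
  Real.iInf_nonneg fun _ => by positivity

theorem D1_eq_zero_of_mem {K : Set (ι → ℝ)} {x : ι → ℝ} (hx : x ∈ K) : D1 K x = 0 := by
  refine le_antisymm ?_ (D1_nonneg K x)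
  have hbdd : BddBelow (Set.range fun z : K => ∑ j, |x j - (z : ι → ℝ) j|) :=
    ⟨0, Set.forall_mem_range.2 fun _ => by positivity⟩
  simpa [D1] using ciInf_le hbdd ⟨x, hx⟩

theorem D1_singleton (z x : ι → ℝ) : D1 {z} x = ∑ j, |x j - z j| :=
  ciInf_unique

end L1Distance

section Margin

variable {mr : Type} [Fintype mr] {n : ℕ} (A : Matrix mr (Fin n) ℝ)

theorem hardCore_eq_empty_iff :
    hardCore A = ∅ ↔ kerAT A ∩ {φ : mr → ℝ | ∀ k, 0 ≤ φ k} = {0} := by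
  constructor
  · intro hH
    refine Set.eq_singleton_iff_unique_mem.2 ⟨⟨by simp [kerAT], fun _ => le_rfl⟩, ?_⟩
    rintro φ ⟨hker, hnonneg⟩
    funext j
    by_contra hne
    exact Set.eq_empty_iff_forall_notMem.1 hH j
      ⟨φ, hker, hnonneg, (hnonneg j).lt_of_ne' hne⟩
  · refine fun hK => Set.eq_empty_iff_forall_notMem.2 ?_
    rintro j ⟨φ, hker, hnonneg, hpos⟩
    have hφ : φ = 0 := hK.subset ⟨hker, hnonneg⟩
    simp [hφ] at hpos

theorem Lip_nonneg (i : Fin n) : 0 ≤ Lip A i :=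
  Real.iSup_nonneg fun _ => sq_nonneg _

variable {A} in
theorem Lip_pos {i : Fin n} (hi : ∃ j, A j i ≠ 0) : 0 < Lip A i := by
  obtain ⟨j, hj⟩ := hi
  calc 0 < A j i ^ 2 := by positivity
    _ ≤ Lip A i := le_ciSup (f := fun j => A j i ^ 2) (Set.finite_range _).bddAbove j

theorem normLinv_nonneg (g : Fin n → ℝ) : 0 ≤ normLinv A g :=
  Real.sqrt_nonneg _

theorem sq_normLinv (g : Fin n → ℝ) : normLinv A g ^ 2 = ∑ i, g i ^ 2 / Lip A i :=
  Real.sq_sqrt <| Finset.sum_nonneg fun i _ => div_nonneg (sq_nonneg _) (Lip_nonneg A i)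

theorem normLinv_smul (c : ℝ) (g : Fin n → ℝ) :
    normLinv A (c • g) = |c| * normLinv A g := by
  simp only [normLinv, Pi.smul_apply, smul_eq_mul, mul_pow, mul_div_assoc, ← Finset.mul_sum,
    Real.sqrt_mul (sq_nonneg c), Real.sqrt_sq_eq_abs]

theorem gammaT_nonneg (K : Set (mr → ℝ)) : 0 ≤ gammaT A K :=
  Real.iInf_nonneg fun _ => div_nonneg (normLinv_nonneg A _) (D1_nonneg _ _)

theorem gammaT_mul_D1_le {K : Set (mr → ℝ)} {φ : mr → ℝ} (hφ : φ ∈ K) :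
    gammaT A K * D1 (K ∩ kerAT A) φ ≤ normLinv A (A.transpose.mulVec φ) := by
  rcases (D1_nonneg (K ∩ kerAT A) φ).eq_or_lt with hzero | hpos
  · simpa only [← hzero, mul_zero] using normLinv_nonneg A _
  have hker : φ ∉ kerAT A := fun hmem => hpos.ne' (D1_eq_zero_of_mem ⟨hφ, hmem⟩)
  have hbdd : BddBelow (Set.range fun ψ : {ψ : mr → ℝ // ψ ∈ K ∧ ψ ∉ kerAT A} =>
      normLinv A (A.transpose.mulVec (ψ : mr → ℝ)) / D1 (K ∩ kerAT A) (ψ : mr → ℝ)) :=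
    ⟨0, Set.forall_mem_range.2 fun _ => div_nonneg (normLinv_nonneg A _) (D1_nonneg _ _)⟩
  exact (le_div_iff₀ hpos).1 (ciInf_le hbdd ⟨φ, hφ, hker⟩)

end Margin

section ExpectedDecrease

variable {mr : Type} [Fintype mr] {m n : ℕ} {A : Matrix mr (Fin n) ℝ}

theorem gradF_eq_smul [Nonempty mr] (hm : 0 < m) (A : Matrix mr (Fin n) ℝ) (lam : Fin n → ℝ) :
    gradF m A lam =
      (fExp m (A.mulVec lam))⁻¹ • A.transpose.mulVec (gradf m (A.mulVec lam)) := by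
  have hlin : HasFDerivAt A.mulVec (LinearMap.toContinuousLinearMap A.mulVecLin) lam :=
    (LinearMap.toContinuousLinearMap A.mulVecLin).hasFDerivAt
  have hF : HasFDerivAt (FObj m A) _ lam :=
    ((hasFDerivAt_fExp_gradf m (A.mulVec lam)).comp lam hlin).log (fExp_pos hm _).ne'
  funext i
  simp [gradF, hF.fderiv, Matrix.mulVec_transpose, Matrix.vecMul, dotProduct]

theorem gammaT_mul_D1_div_le [Nonempty mr] (hm : 0 < m) {K : Set (mr → ℝ)} {lam : Fin n → ℝ}
    (hK : gradf m (A.mulVec lam) ∈ K) :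
    gammaT A K * (D1 (K ∩ kerAT A) (gradf m (A.mulVec lam)) / fExp m (A.mulVec lam)) ≤
      normLinv A (gradF m A lam) := by
  have hf := fExp_pos hm (A.mulVec lam)
  rw [gradF_eq_smul hm, normLinv_smul, abs_of_pos (inv_pos.2 hf), ← mul_div_assoc,
    div_eq_inv_mul]
  gcongr
  exact gammaT_mul_D1_le A hK

theorem sum_mul_add_sum_Lip_mul_sq (hA : ∀ i, ∃ j, A j i ≠ 0) {β : ℝ} (hβ : β ≠ 0)
    {g δ : Fin n → ℝ} (hδ : ∀ i, δ i = -(1 / (β * Lip A i)) * g i) :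
    ∑ i, g i * δ i + β / 2 * ∑ i, Lip A i * δ i ^ 2 = -(1 / (2 * β)) * normLinv A g ^ 2 := by
  rw [sq_normLinv, Finset.mul_sum, Finset.mul_sum, ← Finset.sum_add_distrib]
  refine Finset.sum_congr rfl fun i _ => ?_
  have hL : Lip A i ≠ 0 := (Lip_pos (hA i)).ne'
  rw [hδ i]
  field_simp
  ring

theorem ESO.niceExp_le_sub_sq_normLinv {τ : ℕ} {β : ℝ} (hESO : ESO m A τ β)
    (hA : ∀ i, ∃ j, A j i ≠ 0) (hβ : β ≠ 0) {lam δ : Fin n → ℝ}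
    (hδ : ∀ i, δ i = -(1 / (β * Lip A i)) * gradF m A lam i) :
    niceExp n τ (fun S => FObj m A (lam + restr δ S)) ≤
      FObj m A lam - (τ : ℝ) / (2 * β * (n : ℝ)) * normLinv A (gradF m A lam) ^ 2 := by
  refine (hESO lam δ).trans_eq ?_
  rw [sum_mul_add_sum_Lip_mul_sq hA hβ hδ]
  ring

theorem ESO.niceExp_le_sub_sq_gammaT [Nonempty mr] (hm : 0 < m) {τ : ℕ} {β : ℝ}
    (hESO : ESO m A τ β) (hA : ∀ i, ∃ j, A j i ≠ 0) (hβ : 0 < β) {K : Set (mr → ℝ)}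
    {lam δ : Fin n → ℝ} (hK : gradf m (A.mulVec lam) ∈ K)
    (hδ : ∀ i, δ i = -(1 / (β * Lip A i)) * gradF m A lam i) :
    niceExp n τ (fun S => FObj m A (lam + restr δ S)) ≤
      FObj m A lam - (τ : ℝ) / (2 * β * (n : ℝ)) * (gammaT A K *
        (D1 (K ∩ kerAT A) (gradf m (A.mulVec lam)) / fExp m (A.mulVec lam))) ^ 2 := by
  refine (hESO.niceExp_le_sub_sq_normLinv hA hβ.ne' hδ).trans ?_
  have hγ := gammaT_nonneg A K
  have hD := D1_nonneg (K ∩ kerAT A) (gradf m (A.mulVec lam))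
  have hf := fExp_pos hm (A.mulVec lam)
  gcongr
  exact gammaT_mul_D1_div_le hm hK

end ExpectedDecrease

section WeakLearnability

variable {mr : Type} [Fintype mr] {n : ℕ}

theorem D1_eq_sum_abs_of_hardCore_eq_empty {A : Matrix mr (Fin n) ℝ}
    (hH : hardCore A = ∅) (x : mr → ℝ) :
    D1 ({φ : mr → ℝ | ∀ k, 0 ≤ φ k} ∩ kerAT A) x = ∑ j, |x j| := by
  simp [Set.inter_comm _ (kerAT A), (hardCore_eq_empty_iff A).1 hH, D1_singleton]

theorem stmt8_general [Nonempty mr] {m : ℕ} (hm : 1 ≤ m) (hn : 1 ≤ n)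
    (A : Matrix mr (Fin n) ℝ) (hA : ∀ i : Fin n, ∃ j : mr, A j i ≠ 0)
    (τ : ℕ) (hτn : τ ≤ n) (hH : hardCore A = ∅) :
    kerAT A ∩ {φ : mr → ℝ | ∀ k, 0 ≤ φ k} = {0} ∧
    (∀ lam : Fin n → ℝ,
      D1 ({φ : mr → ℝ | ∀ k, 0 ≤ φ k} ∩ kerAT A) (gradf m (A.mulVec lam))
          = ∑ j, |gradf m (A.mulVec lam) j| ∧
      (∑ j, |gradf m (A.mulVec lam) j|) = fExp m (A.mulVec lam)) ∧
    ∀ β : ℝ, 0 < β → ESO m A τ β →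
      ∀ lam δ : Fin n → ℝ, (∀ i, δ i = -(1 / (β * Lip A i)) * gradF m A lam i) →
        niceExp n τ (fun S => FObj m A (lam + restr δ S)) ≤
          FObj m A lam - (τ : ℝ) / (2 * β * (n : ℝ)) *
            gammaT A {φ : mr → ℝ | ∀ k, 0 ≤ φ k} ^ 2 := by
  refine ⟨(hardCore_eq_empty_iff A).1 hH,
    fun lam => ⟨D1_eq_sum_abs_of_hardCore_eq_empty hH _, sum_abs_gradf m _⟩, ?_⟩
  intro β hβ hESO lam δ hδ
  have hmem : gradf m (A.mulVec lam) ∈ {φ : mr → ℝ | ∀ k, 0 ≤ φ k} := gradf_nonneg m _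
  have hf : fExp m (A.mulVec lam) ≠ 0 := (fExp_pos hm _).ne'
  simpa only [D1_eq_sum_abs_of_hardCore_eq_empty hH, sum_abs_gradf, div_self hf, mul_one]
    using hESO.niceExp_le_sub_sq_gammaT hm hA hβ hmem hδ

end WeakLearnability

/-- under weak learnability (`H(A) = ∅`), `Ker Aᵀ ∩ ℝ₊^m = {0}`,
hence `D¹_{ℝ₊^m ∩ Ker Aᵀ}(∇f(Aλ)) = ‖∇f(Aλ)‖₁ = f(Aλ)`; and under the ESO with
`γ̃(A,ℝ₊^m) > 0`, the expected decrease is at least `(τ/(2βn))·γ̃(A,ℝ₊^m)²`. -/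
theorem stmt8 {m n : ℕ} (hm : 1 ≤ m) (hn : 1 ≤ n) (A : Matrix (Fin m) (Fin n) ℝ)
    (hA : ∀ i : Fin n, ∃ j : Fin m, A j i ≠ 0)
    (τ : ℕ) (hτ1 : 1 ≤ τ) (hτn : τ ≤ n)
    (hH : hardCore A = ∅) :
    kerAT A ∩ {φ : Fin m → ℝ | ∀ k, 0 ≤ φ k} = {0} ∧
    (∀ lam : Fin n → ℝ,
      D1 ({φ : Fin m → ℝ | ∀ k, 0 ≤ φ k} ∩ kerAT A) (gradf m (A.mulVec lam))
          = ∑ j, |gradf m (A.mulVec lam) j| ∧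
      (∑ j, |gradf m (A.mulVec lam) j|) = fExp m (A.mulVec lam)) ∧
    ∀ β : ℝ, 0 < β → ESO m A τ β →
      0 < gammaT A {φ : Fin m → ℝ | ∀ k, 0 ≤ φ k} →
      ∀ lam δ : Fin n → ℝ, (∀ i, δ i = -(1 / (β * Lip A i)) * gradF m A lam i) →
        niceExp n τ (fun S => FObj m A (lam + restr δ S)) ≤
          FObj m A lam - (τ : ℝ) / (2 * β * (n : ℝ)) *
            gammaT A {φ : Fin m → ℝ | ∀ k, 0 ≤ φ k} ^ 2 := by
  have : Nonempty (Fin m) := ⟨⟨0, hm⟩⟩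
  obtain ⟨hker, hgrad, hdecrease⟩ := stmt8_general hm hn A hA τ hτn hH
  exact ⟨hker, hgrad, fun β hβ hESO _ => hdecrease β hβ hESO⟩

end
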